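/- Let 0 < β < 1, ν > 0, 0 < α ≤ 2, d < min(2, 1/β)·α, and let G have Fourier transform Ĝ_t(ξ) = E_β(-ν|ξ|^α t^β). Then for 0 ≤ t ≤ t', ∫_0^t ∫_{ℝ^d} [G_{t'-r}(x-y) - G_{t-r}(x-y)]² dy dr ≤ (C*/(1 - βd/α)) (t'-t)^{1-βd/α}, where C* is the constant with ∫ G_s² dx = C* s^{-βd/α}. -/

import Mathlib

open MeasureTheory Real Set
open scoped RealInnerProductSpace

/-- The Mittag-Leffler function `E_β(x) = ∑_{k≥0} x^k / Γ(1+βk)`. -/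
noncomputable def mittagLeffler (β x : ℝ) : ℝ := ∑' k : ℕ, x ^ k / Real.Gamma (1 + β * k)

/-!
By Plancherel, `∫ (G_{s'} - G_s)²` is the squared `L²` norm of `m_{s'} - m_s` up to normalization,
where `m_s(ξ) = E_β(-ν|ξ|^α s^β)`; these symbols are square integrable because
`E_β(-x) = O(1/x)` as `x → ∞` and `d < 2α`. As `E_β` is nonnegative and increasing on `(-∞, 0]`, for
`s ≤ s'` we have `0 ≤ m_{s'} ≤ m_s`, whence `(m_s - m_{s'})² ≤ m_s² - m_{s'}²`. So the inner
integral is at most `C* (s^(-a) - s'^(-a))` with `a = βd/α < 1`, whose integral in time is explicit.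

Monotonicity of `E_β` comes from `E_β(-t^β) = 1 - ∫₀ᵗ w`, where `w(t) = t^(β-1) E_{β,β}(-t^β)`
solves the Abel equation `Γ(β) w(t) + ∫₀ᵗ (t-s)^(β-1) w(s) ds = t^(β-1)`. Such a solution, positive
near `0`, has no first zero: comparing the equation there with the equation at slightly earlier
times would force a positive contribution from an interval too short to provide it. Nonnegativity
and decay of `E_β` follow from the same integral equations.
-/

open Filter Module
open scoped Topology FourierTransform

section Plancherel

variable {E F : Type*} [NormedAddCommGroup E] [InnerProductSpace ℝ E] [FiniteDimensional ℝ E]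
  [MeasurableSpace E] [BorelSpace E] [NormedAddCommGroup F] [InnerProductSpace ℂ F] {f g : E → F}

lemma integral_norm_sq_eq_norm_sq {X : Type*} [MeasurableSpace X] {μ : Measure X} (u : Lp F 2 μ) :
    ∫ x, ‖u x‖ ^ 2 ∂μ = ‖u‖ ^ 2 := by
  have inner_self := L2.inner_def (𝕜 := ℂ) u u
  simp only [inner_self_eq_norm_sq_to_K] at inner_self
  have ofReal_eq : ((∫ x, ‖u x‖ ^ 2 ∂μ : ℝ) : ℂ) = ((‖u‖ ^ 2 : ℝ) : ℂ) := by
    rw [← integral_complex_ofReal]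
    push_cast
    exact inner_self.symm
  exact_mod_cast ofReal_eq

lemma fourier_sub_of_integrable (hf : Integrable f) (hg : Integrable g) :
    𝓕 (f - g) = 𝓕 f - 𝓕 g := by
  have fourier_sum := VectorFourier.fourierIntegral_add (L := innerₗ E) continuous_fourierChar
    continuous_inner (hf.sub hg) hg
  rw [sub_add_cancel] at fourier_sum
  exact eq_sub_of_add_eq fourier_sum.symm

lemma fourier_eq_integral_exp_inner (g : E → ℂ) (η : E) :
    𝓕 g η = ∫ x, Complex.exp (Complex.I * (⟪-(2 * π) • η, x⟫ : ℝ)) * g x := by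
  rw [Real.fourier_eq']
  refine integral_congr_ae (.of_forall fun x => ?_)
  simp only [smul_eq_mul, real_inner_smul_left, real_inner_comm η x]
  push_cast
  ring_nf

variable [CompleteSpace F]

open SchwartzMap in
lemma ae_eq_fourierInv_toLp_fourier (hf : Integrable f) (hF : MemLp (𝓕 f) 2) :
    f =ᵐ[volume] (𝓕⁻ hF.toLp : Lp F 2 (volume : Measure E)) := by
  set v : Lp F 2 (volume : Measure E) := hF.toLp
  -- Both sides are locally integrable, so testing against smooth compactly supported functions
  -- is enough.
  refine ae_eq_of_integral_contDiff_smul_eq hf.locallyIntegrable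
    ((Lp.memLp (𝓕⁻ v)).locallyIntegrable (by norm_num)) fun ψ hψ hψc => ?_
  have hcpt : HasCompactSupport (Complex.ofRealCLM ∘ ψ) := hψc.comp_left rfl
  let Ψ : 𝓢(E, ℂ) := hcpt.toSchwartzMap (Complex.ofRealCLM.contDiff.comp hψ)
  have flip := VectorFourier.integral_fourierIntegral_smul_eq_flip (L := innerₗ E)
    continuous_fourierChar continuous_inner ((𝓕⁻ Ψ : 𝓢(E, ℂ)).integrable (μ := volume)) hf
  rw [flip_innerₗ] at flip
  symm
  calc ∫ x, ψ x • (𝓕⁻ v : Lp F 2 (volume : Measure E)) x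
      = Lp.toTemperedDistribution (𝓕⁻ v : Lp F 2 (volume : Measure E)) Ψ := by simp [Ψ]
    _ = ∫ x, (𝓕⁻ Ψ : 𝓢(E, ℂ)) x • v x := by
      rw [← Lp.fourierInv_toTemperedDistribution_eq, TemperedDistribution.fourierInv_apply,
        Lp.toTemperedDistribution_apply]
    _ = ∫ x, (𝓕⁻ Ψ : 𝓢(E, ℂ)) x • 𝓕 f x :=
      integral_congr_ae (hF.coeFn_toLp.mono fun x hx => by simp only [v, hx])
    _ = ∫ x, (𝓕 (𝓕⁻ Ψ) : 𝓢(E, ℂ)) x • f x := by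
      rw [fourier_coe]
      exact flip.symm
    _ = ∫ x, ψ x • f x := by
      rw [FourierTransform.fourier_fourierInv_eq]
      simp [Ψ]

theorem integral_norm_sq_fourier_eq (hf : Integrable f) (hF : MemLp (𝓕 f) 2) :
    ∫ ξ, ‖𝓕 f ξ‖ ^ 2 = ∫ x, ‖f x‖ ^ 2 := by
  set v : Lp F 2 (volume : Measure E) := hF.toLp
  set u : Lp F 2 (volume : Measure E) := 𝓕⁻ v with hu
  calc ∫ ξ, ‖𝓕 f ξ‖ ^ 2 = ∫ ξ, ‖v ξ‖ ^ 2 :=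
        integral_congr_ae (hF.coeFn_toLp.mono fun ξ hξ => by simp only [v, hξ])
    _ = ∫ x, ‖u x‖ ^ 2 := by
      rw [integral_norm_sq_eq_norm_sq, integral_norm_sq_eq_norm_sq, ← Lp.norm_fourier_eq u, hu,
        FourierTransform.fourier_fourierInv_eq]
    _ = ∫ x, ‖f x‖ ^ 2 :=
      integral_congr_ae ((ae_eq_fourierInv_toLp_fourier hf hF).mono fun x hx => by
        simp only [u, v, hx])

theorem integral_norm_sub_sq_le_of_fourier (hf : Integrable f) (hg : Integrable g)
    (hF : MemLp (𝓕 f) 2) (hG : MemLp (𝓕 g) 2)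
    (hinner : ∀ ξ, 0 ≤ (inner ℂ (𝓕 f ξ) (𝓕 g ξ - 𝓕 f ξ)).re) :
    ∫ x, ‖f x - g x‖ ^ 2 ≤ (∫ x, ‖g x‖ ^ 2) - ∫ x, ‖f x‖ ^ 2 := by
  have hFG : 𝓕 (f - g) = 𝓕 f - 𝓕 g := fourier_sub_of_integrable hf hg
  have plancherel := integral_norm_sq_fourier_eq (hf.sub hg) (hFG ▸ hF.sub hG)
  have pointwise : ∀ ξ, ‖𝓕 f ξ - 𝓕 g ξ‖ ^ 2 ≤ ‖𝓕 g ξ‖ ^ 2 - ‖𝓕 f ξ‖ ^ 2 := fun ξ => by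
    have expand := norm_add_sq (𝕜 := ℂ) (𝓕 f ξ) (𝓕 g ξ - 𝓕 f ξ)
    rw [add_sub_cancel, RCLike.re_to_complex] at expand
    rw [norm_sub_rev]
    linarith [hinner ξ]
  calc ∫ x, ‖f x - g x‖ ^ 2 = ∫ ξ, ‖𝓕 f ξ - 𝓕 g ξ‖ ^ 2 := by
        rw [hFG] at plancherel
        exact plancherel.symm
    _ ≤ ∫ ξ, (‖𝓕 g ξ‖ ^ 2 - ‖𝓕 f ξ‖ ^ 2) :=
      integral_mono (hF.sub hG).norm.integrable_sq
        (hG.norm.integrable_sq.sub hF.norm.integrable_sq) pointwise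
    _ = (∫ x, ‖g x‖ ^ 2) - ∫ x, ‖f x‖ ^ 2 := by
      rw [integral_sub hG.norm.integrable_sq hF.norm.integrable_sq,
        integral_norm_sq_fourier_eq hg hG, integral_norm_sq_fourier_eq hf hF]

end Plancherel

section MittagLeffler

lemma rpow_mul_exp_neg_le_Gamma {y R : ℝ} (hy : 1 ≤ y) (hR : 0 < R) :
    R ^ (y - 1) * rexp (-R) ≤ Gamma y := by
  have integrable : IntegrableOn (fun x => rexp (-x) * x ^ (y - 1)) (Ioi 0) :=
    GammaIntegral_convergent (zero_lt_one.trans_le hy)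
  calc R ^ (y - 1) * rexp (-R) = ∫ x in Ioi R, R ^ (y - 1) * rexp (-x) := by
        rw [integral_const_mul, integral_exp_neg_Ioi]
    _ ≤ ∫ x in Ioi R, rexp (-x) * x ^ (y - 1) := by
      refine setIntegral_mono_on ((integrableOn_exp_neg_Ioi R).const_mul _)
        (integrable.mono_set (Ioi_subset_Ioi hR.le)) measurableSet_Ioi fun x hx => ?_
      rw [mul_comm]
      gcongr
      exact (mem_Ioi.1 hx).le
    _ ≤ ∫ x in Ioi 0, rexp (-x) * x ^ (y - 1) := by
      refine setIntegral_mono_set integrable ?_ (Ioi_subset_Ioi hR.le).eventuallyLE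
      filter_upwards [ae_restrict_mem measurableSet_Ioi] with x hx
      exact mul_nonneg (exp_pos _).le (rpow_nonneg (mem_Ioi.1 hx).le _)
    _ = Gamma y := (Gamma_eq_integral (zero_lt_one.trans_le hy)).symm

variable {β γ : ℝ}

lemma summable_pow_div_Gamma (hβ : 0 < β) (γ x : ℝ) :
    Summable fun n : ℕ => x ^ n / Gamma (β * n + γ) := by
  -- With `R ^ β > |x|`, the bound `R ^ (y - 1) * exp (-R) ≤ Γ y` makes the series geometric.
  set R : ℝ := (|x| + 1) ^ β⁻¹ with hR
  have hRpos : 0 < R := by positivity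
  have hRβ : R ^ β = |x| + 1 := by rw [hR, rpow_inv_rpow (by positivity) hβ.ne']
  have ratio_lt : |x| / (|x| + 1) < 1 := (div_lt_one (by positivity)).2 (lt_add_one _)
  refine ((summable_geometric_of_lt_one (by positivity) ratio_lt).mul_left
    (rexp R * R ^ (1 - γ))).of_norm_bounded_eventually_nat ?_
  have large : ∀ᶠ n : ℕ in atTop, 1 ≤ β * n + γ :=
    (tendsto_atTop_add_const_right _ γ
      (tendsto_natCast_atTop_atTop.const_mul_atTop hβ)).eventually_ge_atTop 1
  filter_upwards [large] with n hn
  have hΓ : 0 < Gamma (β * n + γ) := Gamma_pos_of_pos (by linarith)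
  have Gamma_ge : (|x| + 1) ^ n * (R ^ (γ - 1) * rexp (-R)) ≤ Gamma (β * n + γ) := by
    have := rpow_mul_exp_neg_le_Gamma hn hRpos
    rwa [add_sub_assoc, rpow_add hRpos, rpow_mul hRpos.le, hRβ, rpow_natCast, mul_assoc] at this
  rw [norm_div, norm_pow, norm_eq_abs, norm_of_nonneg hΓ.le, div_pow, ← neg_sub γ,
    rpow_neg hRpos.le, ← neg_neg R, exp_neg, neg_neg]
  calc |x| ^ n / Gamma (β * n + γ) ≤ |x| ^ n / ((|x| + 1) ^ n * (R ^ (γ - 1) * rexp (-R))) := by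
        gcongr
    _ = _ := by field_simp

/-- The two-parameter Mittag-Leffler function `E_{β,γ}(x) = ∑_{n≥0} x^n / Γ(βn+γ)`. -/
noncomputable def mittagLeffler₂ (β γ x : ℝ) : ℝ := ∑' n : ℕ, x ^ n / Gamma (β * n + γ)

lemma mittagLeffler_eq_mittagLeffler₂ (β x : ℝ) : mittagLeffler β x = mittagLeffler₂ β 1 x := by
  simp only [mittagLeffler, mittagLeffler₂, add_comm]

lemma mittagLeffler₂_zero (β γ : ℝ) : mittagLeffler₂ β γ 0 = (Gamma γ)⁻¹ := by
  rw [mittagLeffler₂, tsum_eq_single 0 fun n hn => by simp [hn]]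
  simp

lemma mittagLeffler_zero (β : ℝ) : mittagLeffler β 0 = 1 := by
  rw [mittagLeffler_eq_mittagLeffler₂, mittagLeffler₂_zero, Gamma_one, inv_one]

lemma mittagLeffler₂_eq_inv_Gamma_add (hβ : 0 < β) (γ x : ℝ) :
    mittagLeffler₂ β γ x = (Gamma γ)⁻¹ + x * mittagLeffler₂ β (γ + β) x := by
  rw [mittagLeffler₂, (summable_pow_div_Gamma hβ γ x).tsum_eq_zero_add, mittagLeffler₂,
    ← tsum_mul_left]
  congr 1
  · simp
  · refine tsum_congr fun n => ?_
    rw [pow_succ', mul_div_assoc]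
    push_cast
    ring_nf

lemma continuous_mittagLeffler₂ (hβ : 0 < β) (γ : ℝ) : Continuous (mittagLeffler₂ β γ) := by
  refine continuous_iff_continuousAt.2 fun x => ?_
  have on_interval : ContinuousOn (mittagLeffler₂ β γ) (Icc (-(|x| + 1)) (|x| + 1)) := by
    refine continuousOn_tsum (fun n => by fun_prop)
      (summable_pow_div_Gamma hβ γ (|x| + 1)).norm fun n y hy => ?_
    rw [norm_div, norm_div, norm_pow, norm_pow]
    gcongr
    rw [norm_eq_abs, norm_of_nonneg (by positivity)]
    exact abs_le.2 hy
  exact on_interval.continuousAt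
    (Icc_mem_nhds (by linarith [neg_abs_le x]) (by linarith [le_abs_self x]))

lemma continuous_mittagLeffler (hβ : 0 < β) : Continuous (mittagLeffler β) := by
  simpa only [← funext (mittagLeffler_eq_mittagLeffler₂ β)] using continuous_mittagLeffler₂ hβ 1

/-- The function `t ↦ t^(γ-1) E_{β,γ}(-t^β)`, for which fractional integration of order `δ` only
shifts `γ` to `γ + δ`. It is meant for `t > 0`. -/
noncomputable def mittagLefflerKernel (β γ t : ℝ) : ℝ :=
  t ^ (γ - 1) * mittagLeffler₂ β γ (-t ^ β)

lemma mittagLefflerKernel_one (β t : ℝ) :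
    mittagLefflerKernel β 1 t = mittagLeffler β (-t ^ β) := by
  rw [mittagLefflerKernel, sub_self, rpow_zero, one_mul, mittagLeffler_eq_mittagLeffler₂]

lemma mittagLefflerKernel_add_mittagLefflerKernel (hβ : 0 < β) (γ : ℝ) {t : ℝ} (ht : 0 < t) :
    mittagLefflerKernel β γ t + mittagLefflerKernel β (γ + β) t = t ^ (γ - 1) / Gamma γ := by
  rw [mittagLefflerKernel, mittagLeffler₂_eq_inv_Gamma_add hβ, mittagLefflerKernel,
    add_sub_right_comm, rpow_add ht]
  ring

lemma continuous_mittagLeffler₂_neg_rpow (hβ : 0 < β) (γ : ℝ) :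
    Continuous fun t : ℝ => mittagLeffler₂ β γ (-t ^ β) :=
  (continuous_mittagLeffler₂ hβ γ).comp (continuous_rpow_const hβ.le).neg

lemma continuousOn_mittagLefflerKernel (hβ : 0 < β) (γ : ℝ) :
    ContinuousOn (mittagLefflerKernel β γ) (Ioi 0) :=
  (continuousOn_id.rpow_const fun _ ht => .inl ht.ne').mul
    (continuous_mittagLeffler₂_neg_rpow hβ γ).continuousOn

lemma hasSum_mittagLefflerKernel (hβ : 0 < β) (γ : ℝ) {t : ℝ} (ht : 0 < t) :
    HasSum (fun n : ℕ => (-1) ^ n / Gamma (β * n + γ) * t ^ (β * n + γ - 1))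
      (mittagLefflerKernel β γ t) := by
  refine ((summable_pow_div_Gamma hβ γ (-t ^ β)).hasSum.mul_left (t ^ (γ - 1))).congr_fun
    fun n => ?_
  rw [add_sub_assoc, rpow_add ht, rpow_mul ht.le, rpow_natCast, neg_pow (t ^ β)]
  ring

end MittagLeffler

section FractionalIntegral

lemma intervalIntegrable_sub_rpow {r : ℝ} (hr : -1 < r) (T a b : ℝ) :
    IntervalIntegrable (fun s => (T - s) ^ r) volume a b := by
  simpa only [sub_sub_cancel] using
    (intervalIntegral.intervalIntegrable_rpow' hr (a := T - a) (b := T - b)).comp_sub_left T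

lemma integral_sub_rpow {r : ℝ} (hr : -1 < r) (T a b : ℝ) :
    ∫ s in a..b, (T - s) ^ r = ((T - a) ^ (r + 1) - (T - b) ^ (r + 1)) / (r + 1) := by
  rw [intervalIntegral.integral_comp_sub_left (fun u : ℝ => u ^ r), integral_rpow (.inl hr)]

lemma integral_sub_rpow_mul_le {β t T M : ℝ} {f : ℝ → ℝ} (hβ : 0 < β) (htT : t ≤ T)
    (hf : IntervalIntegrable (fun s => (T - s) ^ (β - 1) * f s) volume t T)
    (hM : ∀ s ∈ Icc t T, f s ≤ M) :
    ∫ s in t..T, (T - s) ^ (β - 1) * f s ≤ (T - t) ^ β / β * M := by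
  have exponent : -1 < β - 1 := by linarith
  calc ∫ s in t..T, (T - s) ^ (β - 1) * f s ≤ ∫ s in t..T, (T - s) ^ (β - 1) * M :=
        intervalIntegral.integral_mono_on htT hf
          ((intervalIntegrable_sub_rpow exponent T t T).mul_const _) fun s hs =>
          mul_le_mul_of_nonneg_left (hM s hs) (rpow_nonneg (sub_nonneg.2 hs.2) _)
    _ = (T - t) ^ β / β * M := by
      rw [intervalIntegral.integral_mul_const, integral_sub_rpow exponent, sub_add_cancel,
        sub_self, zero_rpow hβ.ne', sub_zero]

lemma le_integral_sub_rpow_mul {β t T m : ℝ} {f : ℝ → ℝ} (hβ : 0 < β) (htT : t ≤ T)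
    (hf : IntervalIntegrable (fun s => (T - s) ^ (β - 1) * f s) volume t T)
    (hm : ∀ s ∈ Icc t T, m ≤ f s) :
    (T - t) ^ β / β * m ≤ ∫ s in t..T, (T - s) ^ (β - 1) * f s := by
  have neg_le := integral_sub_rpow_mul_le (f := fun s => -f s) (M := -m) hβ htT
    (by simpa only [mul_neg, Pi.neg_def] using hf.neg) fun s hs => neg_le_neg (hm s hs)
  simpa only [mul_neg, intervalIntegral.integral_neg, neg_le_neg_iff] using neg_le

variable {β γ δ t : ℝ}

lemma integral_sub_rpow_mul_rpow (hγ : 0 < γ) (hδ : 0 < δ) (ht : 0 < t) :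
    ∫ s in 0..t, (t - s) ^ (δ - 1) * s ^ (γ - 1)
      = ProbabilityTheory.beta γ δ * t ^ (γ + δ - 1) := by
  have scaled := Complex.betaIntegral_scaled (γ : ℂ) (δ : ℂ) ht
  have integrand : ∀ s ∈ uIcc 0 t, (s : ℂ) ^ ((γ : ℂ) - 1) * ((t : ℂ) - s) ^ ((δ : ℂ) - 1)
      = (((t - s) ^ (δ - 1) * s ^ (γ - 1) : ℝ) : ℂ) := fun s hs => by
    rw [uIcc_of_le ht.le] at hs
    push_cast
    rw [Complex.ofReal_cpow hs.1, Complex.ofReal_cpow (sub_nonneg.2 hs.2)]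
    push_cast
    ring
  rw [intervalIntegral.integral_congr integrand, intervalIntegral.integral_ofReal] at scaled
  have value := congrArg Complex.re scaled
  rwa [Complex.ofReal_re, ← Complex.ofReal_add, ← Complex.ofReal_one, ← Complex.ofReal_sub,
    ← Complex.ofReal_cpow ht.le, Complex.re_ofReal_mul,
    ← ProbabilityTheory.beta_eq_betaIntegralReal γ δ hγ hδ, mul_comm] at value

lemma intervalIntegrable_sub_rpow_mul_rpow (hγ : 0 < γ) (hδ : 0 < δ) (ht : 0 < t) :
    IntervalIntegrable (fun s => (t - s) ^ (δ - 1) * s ^ (γ - 1)) volume 0 t := by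
  refine intervalIntegral.intervalIntegrable_of_integral_ne_zero ?_
  rw [integral_sub_rpow_mul_rpow hγ hδ ht]
  exact (mul_pos (ProbabilityTheory.beta_pos hγ hδ) (rpow_pos_of_pos ht _)).ne'

lemma intervalIntegrable_sub_rpow_mul_mittagLefflerKernel (hβ : 0 < β) (hγ : 0 < γ) (hδ : 0 < δ)
    (ht : 0 < t) :
    IntervalIntegrable (fun s => (t - s) ^ (δ - 1) * mittagLefflerKernel β γ s) volume 0 t := by
  simpa only [mittagLefflerKernel, mul_assoc] using
    (intervalIntegrable_sub_rpow_mul_rpow hγ hδ ht).mul_continuousOn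
      (continuous_mittagLeffler₂_neg_rpow hβ γ).continuousOn

lemma hasSum_integral_sub_rpow_mul_mittagLefflerKernel (hβ : 0 < β) (hγ : 0 < γ) (hδ : 0 < δ)
    (ht : 0 < t) :
    HasSum (fun n : ℕ => ∫ s in 0..t,
        (-1) ^ n / Gamma (β * n + γ) * ((t - s) ^ (δ - 1) * s ^ (β * n + γ - 1)))
      (∫ s in 0..t, (t - s) ^ (δ - 1) * mittagLefflerKernel β γ s) := by
  have Gamma_pos (n : ℕ) : 0 < Gamma (β * n + γ) := Gamma_pos_of_pos (by positivity)
  refine intervalIntegral.hasSum_integral_of_dominated_convergence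
    (fun n s => (t ^ β) ^ n / Gamma (β * n + γ) * ((t - s) ^ (δ - 1) * s ^ (γ - 1)))
    (fun n => by fun_prop) (fun n => .of_forall fun s hs => ?_)
    (.of_forall fun s _ => (summable_pow_div_Gamma hβ γ (t ^ β)).mul_right _) ?_
    (.of_forall fun s hs => ?_)
  · rw [uIoc_of_le ht.le] at hs
    have ts : 0 ≤ t - s := sub_nonneg.2 hs.2
    have s_pos : 0 < s := hs.1
    rw [add_sub_assoc, rpow_add s_pos, rpow_mul s_pos.le, rpow_natCast, norm_mul, norm_div,
      norm_pow, norm_neg, norm_one, one_pow, norm_of_nonneg (Gamma_pos n).le,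
      norm_of_nonneg (by positivity)]
    calc _ = (s ^ β) ^ n / Gamma (β * n + γ) * ((t - s) ^ (δ - 1) * s ^ (γ - 1)) := by ring
      _ ≤ _ := by
        have := Gamma_pos n
        gcongr
        exact hs.2
  · simp only [tsum_mul_right]
    exact (intervalIntegrable_sub_rpow_mul_rpow hγ hδ ht).const_mul _
  · rw [uIoc_of_le ht.le] at hs
    refine ((hasSum_mittagLefflerKernel hβ γ hs.1).mul_left _).congr_fun fun n => ?_
    exact mul_left_comm _ _ _

theorem integral_sub_rpow_mul_mittagLefflerKernel (hβ : 0 < β) (hγ : 0 < γ) (hδ : 0 < δ)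
    (ht : 0 < t) :
    ∫ s in 0..t, (t - s) ^ (δ - 1) * mittagLefflerKernel β γ s
      = Gamma δ * mittagLefflerKernel β (γ + δ) t := by
  refine (hasSum_integral_sub_rpow_mul_mittagLefflerKernel hβ hγ hδ ht).unique
    (((hasSum_mittagLefflerKernel hβ (γ + δ) ht).mul_left (Gamma δ)).congr_fun fun n => ?_)
  have exponent_pos : 0 < β * n + γ := by positivity
  have Gamma_ne := (Gamma_pos_of_pos exponent_pos).ne'
  rw [intervalIntegral.integral_const_mul, integral_sub_rpow_mul_rpow exponent_pos hδ ht,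
    ProbabilityTheory.beta, ← add_assoc]
  field_simp

lemma intervalIntegrable_mittagLefflerKernel (hβ : 0 < β) (hγ : 0 < γ) (ht : 0 ≤ t) :
    IntervalIntegrable (mittagLefflerKernel β γ) volume 0 t := by
  obtain rfl | ht := ht.eq_or_lt
  · exact .refl
  · simpa using intervalIntegrable_sub_rpow_mul_mittagLefflerKernel hβ hγ one_pos ht

lemma integral_mittagLefflerKernel (hβ : 0 < β) (hγ : 0 < γ) (ht : 0 < t) :
    ∫ s in 0..t, mittagLefflerKernel β γ s = mittagLefflerKernel β (γ + 1) t := by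
  simpa using integral_sub_rpow_mul_mittagLefflerKernel hβ hγ one_pos ht

end FractionalIntegral

section AbelEquation

lemma pos_of_pos_on_Ioo_imp_pos {w : ℝ → ℝ} {a : ℝ} (hw : ContinuousOn w (Ioi a))
    (near : ∀ᶠ s in 𝓝[>] a, 0 < w s)
    (step : ∀ T > a, (∀ s ∈ Ioo a T, 0 < w s) → 0 < w T) : ∀ t > a, 0 < w t := by
  intro t ht
  by_contra! hwt
  obtain ⟨b, hab, near⟩ := mem_nhdsGT_iff_exists_Ioo_subset.1 near
  have hbt : b ≤ t := not_lt.1 fun htb => hwt.not_gt (near ⟨ht, htb⟩)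
  have closed : IsClosed (Icc b t ∩ w ⁻¹' Iic 0) :=
    (hw.mono fun s hs => hab.trans_le hs.1).preimage_isClosed_of_isClosed isClosed_Icc isClosed_Iic
  obtain ⟨T, ⟨hT, hwT⟩, least⟩ :=
    (isCompact_Icc.of_isClosed_subset closed inter_subset_left).exists_isLeast
      ⟨t, ⟨hbt, le_rfl⟩, hwt⟩
  refine (step T (hab.trans_le hT.1) fun s hs => ?_).not_ge hwT
  by_contra! hws
  obtain hsb | hbs := lt_or_ge s b
  · exact hws.not_gt (near ⟨hs.1, hsb⟩)
  · exact hs.2.not_ge (least ⟨⟨hbs, hs.2.le.trans hT.2⟩, hws⟩)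

lemma sub_rpow_mul_rpow_le_of_nonpos {p s t T : ℝ} (hp : p ≤ 0) (hs : 0 ≤ s) (hst : s < t)
    (htT : t ≤ T) : (T - s) ^ p * t ^ p ≤ T ^ p * (t - s) ^ p := by
  have ht : 0 < t := hs.trans_lt hst
  have hts : 0 < t - s := sub_pos.2 hst
  rw [← mul_rpow (by linarith) ht.le, ← mul_rpow (by linarith) hts.le]
  exact rpow_le_rpow_of_nonpos (mul_pos (ht.trans_le htT) hts) (by nlinarith) hp

lemma exists_sub_rpow_mul_rpow_div_lt {β c T : ℝ} (hβ : 0 < β) (hT : 0 < T) (hc : 0 < c) :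
    ∃ δ ∈ Ioo 0 T, (T - δ) ^ (β - 1) * (δ ^ β / β) < T ^ (β - 1) * c := by
  have cont : ContinuousAt (fun δ : ℝ => (T - δ) ^ (β - 1) * (δ ^ β / β)) 0 :=
    ((continuousAt_const.sub continuousAt_id).rpow_const (.inl (by simpa using hT.ne'))).mul
      ((continuousAt_rpow_const _ _ (.inr hβ.le)).div_const _)
  have small : ∀ᶠ δ : ℝ in 𝓝[>] 0, (T - δ) ^ (β - 1) * (δ ^ β / β) < T ^ (β - 1) * c := by
    refine (cont.eventually_lt continuousAt_const ?_).filter_mono nhdsWithin_le_nhds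
    simpa [zero_rpow hβ.ne'] using mul_pos (rpow_pos_of_pos hT _) hc
  exact ((eventually_mem_set.2 (Ioo_mem_nhdsGT hT)).and small).exists

/-- `w` is a continuous solution on `(0, ∞)` of the second-kind Abel equation
`c w(t) + ∫₀ᵗ (t-s)^(β-1) w(s) ds = t^(β-1)`. -/
structure IsAbelSolution (β c : ℝ) (w : ℝ → ℝ) : Prop where
  continuousOn : ContinuousOn w (Ioi 0)
  intervalIntegrable : ∀ t > 0,
    IntervalIntegrable (fun s => (t - s) ^ (β - 1) * w s) volume 0 t
  equation : ∀ t > 0, c * w t + ∫ s in 0..t, (t - s) ^ (β - 1) * w s = t ^ (β - 1)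

namespace IsAbelSolution

variable {β c t T : ℝ} {w : ℝ → ℝ}

-- Since `(T - s) ^ (β - 1) * t ^ (β - 1) ≤ T ^ (β - 1) * (t - s) ^ (β - 1)`, the equation at `t`
-- controls the part of the equation at `T` that remembers `(0, t)`.
lemma rpow_mul_le (hw : IsAbelSolution β c w) (hβ1 : β ≤ 1) (ht : 0 < t) (htT : t < T)
    (nonneg : ∀ s ∈ Ioo 0 t, 0 ≤ w s) :
    T ^ (β - 1) * (c * w t)
      ≤ t ^ (β - 1) * (c * w T + ∫ s in t..T, (T - s) ^ (β - 1) * w s) := by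
  have hT : 0 < T := ht.trans htT
  have mem_uIcc : t ∈ uIcc 0 T := Icc_subset_uIcc ⟨ht.le, htT.le⟩
  have int_left := (hw.intervalIntegrable T hT).mono_set (uIcc_subset_uIcc_left mem_uIcc)
  have int_right := (hw.intervalIntegrable T hT).mono_set (uIcc_subset_uIcc_right mem_uIcc)
  have past : t ^ (β - 1) * ∫ s in 0..t, (T - s) ^ (β - 1) * w s
      ≤ T ^ (β - 1) * ∫ s in 0..t, (t - s) ^ (β - 1) * w s := by
    rw [← intervalIntegral.integral_const_mul, ← intervalIntegral.integral_const_mul]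
    refine intervalIntegral.integral_mono_on_of_le_Ioo ht.le (int_left.const_mul _)
      ((hw.intervalIntegrable t ht).const_mul _) fun s hs => ?_
    rw [← mul_assoc, ← mul_assoc, mul_comm (t ^ _)]
    exact mul_le_mul_of_nonneg_right
      (sub_rpow_mul_rpow_le_of_nonpos (sub_nonpos.2 hβ1) hs.1.le hs.2 htT.le) (nonneg s hs)
  have eq_t := hw.equation t ht
  have eq_T := hw.equation T hT
  rw [← intervalIntegral.integral_add_adjacent_intervals int_left int_right] at eq_T
  linear_combination past + T ^ (β - 1) * eq_t - t ^ (β - 1) * eq_T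

lemma pos_of_pos_on_Ioo (hw : IsAbelSolution β c w) (hβ0 : 0 < β) (hβ1 : β ≤ 1) (hc : 0 < c)
    (hT : 0 < T) (pos : ∀ s ∈ Ioo 0 T, 0 < w s) : 0 < w T := by
  by_contra! hwT
  -- Compare the equation at `T` with the one at the maximum point `t` of `w` on `[T - δ, T]`.
  obtain ⟨δ, ⟨hδ0, hδT⟩, hδ⟩ := exists_sub_rpow_mul_rpow_div_lt hβ0 hT hc
  obtain ⟨t, ht, isMax⟩ := isCompact_Icc.exists_isMaxOn (nonempty_Icc.2 (sub_le_self T hδ0.le))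
    (hw.continuousOn.mono fun s hs => (sub_pos.2 hδT).trans_le hs.1)
  have hwt : 0 < w t :=
    (pos (T - δ) ⟨sub_pos.2 hδT, sub_lt_self T hδ0⟩).trans_le
      (isMax (left_mem_Icc.2 (sub_le_self T hδ0.le)))
  have ht0 : 0 < t := (sub_pos.2 hδT).trans_le ht.1
  have htT : t < T := ht.2.lt_of_ne fun h => hwT.not_gt (h ▸ hwt)
  have recent : ∫ s in t..T, (T - s) ^ (β - 1) * w s ≤ δ ^ β / β * w t := by
    calc ∫ s in t..T, (T - s) ^ (β - 1) * w s ≤ (T - t) ^ β / β * w t :=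
          integral_sub_rpow_mul_le hβ0 htT.le
            ((hw.intervalIntegrable T hT).mono_set
              (uIcc_subset_uIcc_right (Icc_subset_uIcc ⟨ht0.le, htT.le⟩)))
            fun s hs => isMax ⟨ht.1.trans hs.1, hs.2⟩
      _ ≤ δ ^ β / β * w t := by
        have := sub_nonneg.2 ht.2
        gcongr
        exact sub_le_comm.1 ht.1
  have bound : T ^ (β - 1) * c * w t ≤ (T - δ) ^ (β - 1) * (δ ^ β / β) * w t := by
    calc T ^ (β - 1) * c * w t
        ≤ t ^ (β - 1) * (c * w T + ∫ s in t..T, (T - s) ^ (β - 1) * w s) := by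
          rw [mul_assoc]
          exact hw.rpow_mul_le hβ1 ht0 htT fun s hs => (pos s ⟨hs.1, hs.2.trans htT⟩).le
      _ ≤ t ^ (β - 1) * (δ ^ β / β * w t) := by
        gcongr
        exact (add_le_of_nonpos_left (mul_nonpos_of_nonneg_of_nonpos hc.le hwT)).trans recent
      _ ≤ (T - δ) ^ (β - 1) * (δ ^ β / β * w t) := by
        gcongr ?_ * _
        exact rpow_le_rpow_of_nonpos (sub_pos.2 hδT) ht.1 (sub_nonpos.2 hβ1)
      _ = _ := (mul_assoc _ _ _).symm
  exact hδ.not_ge (le_of_mul_le_mul_right bound hwt)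

theorem pos (hw : IsAbelSolution β c w) (hβ0 : 0 < β) (hβ1 : β ≤ 1) (hc : 0 < c)
    (near : ∀ᶠ s in 𝓝[>] 0, 0 < w s) (ht : 0 < t) : 0 < w t :=
  pos_of_pos_on_Ioo_imp_pos hw.continuousOn near
    (fun _ hT => hw.pos_of_pos_on_Ioo hβ0 hβ1 hc hT) t ht

end IsAbelSolution

variable {β t : ℝ}

lemma isAbelSolution_mittagLefflerKernel (hβ : 0 < β) :
    IsAbelSolution β (Gamma β) (mittagLefflerKernel β β) where
  continuousOn := continuousOn_mittagLefflerKernel hβ β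
  intervalIntegrable t ht := intervalIntegrable_sub_rpow_mul_mittagLefflerKernel hβ hβ hβ ht
  equation t ht := by
    rw [integral_sub_rpow_mul_mittagLefflerKernel hβ hβ hβ ht, ← mul_add,
      mittagLefflerKernel_add_mittagLefflerKernel hβ β ht,
      mul_div_cancel₀ _ (Gamma_pos_of_pos hβ).ne']

theorem mittagLefflerKernel_pos (hβ0 : 0 < β) (hβ1 : β ≤ 1) (ht : 0 < t) :
    0 < mittagLefflerKernel β β t := by
  have hΓ : 0 < Gamma β := Gamma_pos_of_pos hβ0
  refine (isAbelSolution_mittagLefflerKernel hβ0).pos hβ0 hβ1 hΓ ?_ ht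
  have near : ∀ᶠ s : ℝ in 𝓝 0, 0 < mittagLeffler₂ β β (-s ^ β) := by
    refine (continuous_mittagLeffler₂_neg_rpow hβ0 β).continuousAt.eventually (lt_mem_nhds ?_)
    simpa only [zero_rpow hβ0.ne', neg_zero, mittagLeffler₂_zero, inv_pos] using hΓ
  filter_upwards [near.filter_mono nhdsWithin_le_nhds, self_mem_nhdsWithin] with s hs hs0
  exact mul_pos (rpow_pos_of_pos hs0 _) hs

end AbelEquation

section NegativeAxis

variable {β t x : ℝ}

lemma mittagLefflerKernel_one_eq_one_sub (hβ : 0 < β) (ht : 0 < t) :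
    mittagLefflerKernel β 1 t = 1 - mittagLefflerKernel β (1 + β) t := by
  rw [eq_sub_iff_add_eq, mittagLefflerKernel_add_mittagLefflerKernel hβ 1 ht, sub_self, rpow_zero,
    Gamma_one, div_one]

lemma mittagLefflerKernel_one_eq_one_sub_integral (hβ : 0 < β) (ht : 0 ≤ t) :
    mittagLefflerKernel β 1 t = 1 - ∫ s in 0..t, mittagLefflerKernel β β s := by
  obtain rfl | ht := ht.eq_or_lt
  · rw [mittagLefflerKernel_one, zero_rpow hβ.ne', neg_zero, mittagLeffler_zero,
      intervalIntegral.integral_same, sub_zero]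
  · rw [integral_mittagLefflerKernel hβ hβ ht, add_comm β,
      mittagLefflerKernel_one_eq_one_sub hβ ht]

lemma antitoneOn_mittagLefflerKernel_one (hβ0 : 0 < β) (hβ1 : β ≤ 1) :
    AntitoneOn (mittagLefflerKernel β 1) (Ici 0) := by
  intro s hs t ht hst
  rw [mittagLefflerKernel_one_eq_one_sub_integral hβ0 hs,
    mittagLefflerKernel_one_eq_one_sub_integral hβ0 ht]
  refine sub_le_sub_left (intervalIntegral.integral_mono_interval le_rfl hs hst ?_
    (intervalIntegrable_mittagLefflerKernel hβ0 hβ0 ht)) 1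
  filter_upwards [ae_restrict_mem measurableSet_Ioc] with r hr
  exact (mittagLefflerKernel_pos hβ0 hβ1 hr.1).le

lemma mittagLefflerKernel_one_nonneg (hβ0 : 0 < β) (hβ1 : β ≤ 1) (ht : 0 < t) :
    0 ≤ mittagLefflerKernel β 1 t := by
  have power_pos : 0 < t ^ (β - 1) := rpow_pos_of_pos ht _
  have solution := isAbelSolution_mittagLefflerKernel hβ0
  have weighted : t ^ (β - 1) * ∫ s in 0..t, mittagLefflerKernel β β s ≤ t ^ (β - 1) * 1 := by
    calc t ^ (β - 1) * ∫ s in 0..t, mittagLefflerKernel β β s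
        ≤ ∫ s in 0..t, (t - s) ^ (β - 1) * mittagLefflerKernel β β s := by
          rw [← intervalIntegral.integral_const_mul]
          refine intervalIntegral.integral_mono_on_of_le_Ioo ht.le
            ((intervalIntegrable_mittagLefflerKernel hβ0 hβ0 ht.le).const_mul _)
            (solution.intervalIntegrable t ht) fun s hs => ?_
          exact mul_le_mul_of_nonneg_right (rpow_le_rpow_of_nonpos (sub_pos.2 hs.2)
            (sub_le_self t hs.1.le) (sub_nonpos.2 hβ1)) (mittagLefflerKernel_pos hβ0 hβ1 hs.1).le
      _ ≤ t ^ (β - 1) * 1 := by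
        rw [mul_one, ← solution.equation t ht]
        exact le_add_of_nonneg_left
          (mul_pos (Gamma_pos_of_pos hβ0) (mittagLefflerKernel_pos hβ0 hβ1 ht)).le
  rw [mittagLefflerKernel_one_eq_one_sub_integral hβ0 ht.le]
  exact sub_nonneg.2 (le_of_mul_le_mul_left weighted power_pos)

lemma mittagLefflerKernel_one_mul_le (hβ0 : 0 < β) (hβ1 : β ≤ 1) (ht : 0 < t) :
    mittagLefflerKernel β 1 t * (Gamma (β + 1) + t ^ β) ≤ Gamma (β + 1) := by
  have average : (t - 0) ^ β / β * mittagLefflerKernel β 1 t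
      ≤ ∫ s in 0..t, (t - s) ^ (β - 1) * mittagLefflerKernel β 1 s :=
    le_integral_sub_rpow_mul hβ0 ht.le
      (intervalIntegrable_sub_rpow_mul_mittagLefflerKernel hβ0 one_pos hβ0 ht) fun s hs =>
      antitoneOn_mittagLefflerKernel_one hβ0 hβ1 hs.1 ht.le hs.2
  rw [integral_sub_rpow_mul_mittagLefflerKernel hβ0 one_pos hβ0 ht, sub_zero, div_mul_eq_mul_div,
    div_le_iff₀ hβ0] at average
  rw [Gamma_add_one hβ0.ne']
  linear_combination average + β * Gamma β * mittagLefflerKernel_one_eq_one_sub hβ0 ht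

lemma mittagLeffler_eq_mittagLefflerKernel (hβ : β ≠ 0) (hx : x ≤ 0) :
    mittagLeffler β x = mittagLefflerKernel β 1 ((-x) ^ β⁻¹) := by
  rw [mittagLefflerKernel_one, rpow_inv_rpow (neg_nonneg.2 hx) hβ, neg_neg]

theorem monotoneOn_mittagLeffler (hβ0 : 0 < β) (hβ1 : β ≤ 1) :
    MonotoneOn (mittagLeffler β) (Iic 0) := by
  intro x hx y hy hxy
  rw [mittagLeffler_eq_mittagLefflerKernel hβ0.ne' hx,
    mittagLeffler_eq_mittagLefflerKernel hβ0.ne' hy]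
  exact antitoneOn_mittagLefflerKernel_one hβ0 hβ1 (rpow_nonneg (neg_nonneg.2 hy) _)
    (rpow_nonneg (neg_nonneg.2 hx) _)
    (rpow_le_rpow (neg_nonneg.2 hy) (neg_le_neg hxy) (inv_nonneg.2 hβ0.le))

theorem mittagLeffler_nonneg_of_nonpos (hβ0 : 0 < β) (hβ1 : β ≤ 1) (hx : x ≤ 0) :
    0 ≤ mittagLeffler β x := by
  obtain rfl | hx := hx.eq_or_lt
  · rw [mittagLeffler_zero]
    exact zero_le_one
  · rw [mittagLeffler_eq_mittagLefflerKernel hβ0.ne' hx.le]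
    exact mittagLefflerKernel_one_nonneg hβ0 hβ1 (rpow_pos_of_pos (neg_pos.2 hx) _)

theorem mittagLeffler_le_inv_of_nonpos (hβ0 : 0 < β) (hβ1 : β ≤ 1) (hx : x ≤ 0) :
    mittagLeffler β x ≤ (1 - x / Gamma (β + 1))⁻¹ := by
  have hΓ : 0 < Gamma (β + 1) := Gamma_pos_of_pos (by positivity)
  obtain rfl | hx := hx.eq_or_lt
  · rw [mittagLeffler_zero, zero_div, sub_zero, inv_one]
  · have bound := mittagLefflerKernel_one_mul_le hβ0 hβ1 (rpow_pos_of_pos (neg_pos.2 hx) β⁻¹)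
    rw [← mittagLeffler_eq_mittagLefflerKernel hβ0.ne' hx.le,
      rpow_inv_rpow (neg_pos.2 hx).le hβ0.ne', ← sub_eq_add_neg,
      ← le_div_iff₀ (by linarith)] at bound
    rwa [one_sub_div hΓ.ne', inv_div]

end NegativeAxis

section Symbol

variable {E : Type*} [NormedAddCommGroup E] [InnerProductSpace ℝ E] [FiniteDimensional ℝ E]
  [MeasurableSpace E] [BorelSpace E] {α β a b c : ℝ} {g h : E → ℝ}

lemma one_add_rpow_le {r : ℝ} (hα : 0 ≤ α) (hr : 0 ≤ r) :
    (1 + r) ^ α ≤ 2 ^ α * (1 + r ^ α) := by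
  have max_rpow_le : max 1 r ^ α ≤ 1 + r ^ α := by
    obtain hr1 | hr1 := le_total r 1
    · rw [max_eq_left hr1, one_rpow]
      exact le_add_of_nonneg_right (rpow_nonneg hr _)
    · rw [max_eq_right hr1]
      exact le_add_of_nonneg_left zero_le_one
  calc (1 + r) ^ α ≤ (2 * max 1 r) ^ α := by
        gcongr
        linarith [le_max_left 1 r, le_max_right 1 r]
    _ = 2 ^ α * max 1 r ^ α := mul_rpow zero_le_two (by positivity)
    _ ≤ 2 ^ α * (1 + r ^ α) := by gcongr

lemma memLp_two_one_add_norm_rpow_neg (hα : (finrank ℝ E : ℝ) < 2 * α) :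
    MemLp (fun η : E => (1 + ‖η‖) ^ (-α)) 2 := by
  have pos (η : E) : 0 < 1 + ‖η‖ := by positivity
  have cont : Continuous fun η : E => (1 + ‖η‖) ^ (-α) :=
    (by fun_prop : Continuous fun η : E => 1 + ‖η‖).rpow_const fun η => .inl (pos η).ne'
  rw [memLp_two_iff_integrable_sq cont.aestronglyMeasurable]
  refine (integrable_one_add_norm hα).congr (.of_forall fun η => ?_)
  simp only
  rw [← rpow_mul_natCast (pos η).le]
  push_cast
  ring_nf

lemma mittagLeffler_neg_mul_rpow_le (hβ0 : 0 < β) (hβ1 : β ≤ 1) (hα : 0 ≤ α) (hc : 0 < c) {r : ℝ}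
    (hr : 0 ≤ r) :
    mittagLeffler β (-(c * r ^ α)) ≤ 2 ^ α / min 1 (c / Gamma (β + 1)) * (1 + r) ^ (-α) := by
  set k : ℝ := c / Gamma (β + 1) with hk
  have k_pos : 0 < k := div_pos hc (Gamma_pos_of_pos (by positivity))
  have : 0 < min 1 k := lt_min one_pos k_pos
  have denominator : min 1 k / 2 ^ α * (1 + r) ^ α ≤ 1 + k * r ^ α := by
    calc min 1 k / 2 ^ α * (1 + r) ^ α ≤ min 1 k / 2 ^ α * (2 ^ α * (1 + r ^ α)) := by
          gcongr
          exact one_add_rpow_le hα hr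
      _ = min 1 k * 1 + min 1 k * r ^ α := by field_simp
      _ ≤ 1 + k * r ^ α := by
        gcongr
        · rw [mul_one]
          exact min_le_left _ _
        · exact min_le_right _ _
  calc mittagLeffler β (-(c * r ^ α)) ≤ (1 + k * r ^ α)⁻¹ := by
        convert mittagLeffler_le_inv_of_nonpos hβ0 hβ1
          (neg_nonpos.2 (mul_nonneg hc.le (rpow_nonneg hr α))) using 2
        rw [hk]
        ring
    _ ≤ (min 1 k / 2 ^ α * (1 + r) ^ α)⁻¹ := by gcongr
    _ = _ := by rw [mul_inv, inv_div, rpow_neg (by positivity)]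

lemma memLp_two_mittagLeffler_norm (hβ0 : 0 < β) (hβ1 : β ≤ 1) (hα0 : 0 ≤ α)
    (hα : (finrank ℝ E : ℝ) < 2 * α) (hc : 0 < c) :
    MemLp (fun η : E => mittagLeffler β (-(c * ‖η‖ ^ α))) 2 := by
  have cont : Continuous fun η : E => mittagLeffler β (-(c * ‖η‖ ^ α)) :=
    (continuous_mittagLeffler hβ0).comp
      (continuous_const.mul (continuous_norm.rpow_const fun _ => .inr hα0)).neg
  refine ((memLp_two_one_add_norm_rpow_neg hα).const_mul
    (2 ^ α / min 1 (c / Gamma (β + 1)))).mono cont.aestronglyMeasurable (.of_forall fun η => ?_)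
  have nonneg := mittagLeffler_nonneg_of_nonpos hβ0 hβ1
    (neg_nonpos.2 (mul_nonneg hc.le (rpow_nonneg (norm_nonneg η) α)))
  rw [norm_of_nonneg nonneg]
  exact (mittagLeffler_neg_mul_rpow_le hβ0 hβ1 hα0 hc (norm_nonneg η)).trans (le_abs_self _)

/-- `g` has the Fourier transform `ξ ↦ E_β(-a |ξ|^α)`, with the convention
`ξ ↦ ∫ exp(i ξ·x) g(x) dx`. -/
def HasMittagLefflerFourier (β α a : ℝ) (g : E → ℝ) : Prop :=
  ∀ ξ : E, ∫ x, Complex.exp (Complex.I * (⟪ξ, x⟫ : ℝ)) * (g x : ℂ)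
    = (mittagLeffler β (-(a * ‖ξ‖ ^ α)) : ℂ)

namespace HasMittagLefflerFourier

lemma integrable_ofReal (hg : HasMittagLefflerFourier β α a g) (hα : α ≠ 0) :
    Integrable fun x => (g x : ℂ) := by
  refine .of_integral_ne_zero ?_
  have at_zero := hg 0
  simp only [inner_zero_left, Complex.ofReal_zero, mul_zero, Complex.exp_zero, one_mul, norm_zero,
    zero_rpow hα, neg_zero, mittagLeffler_zero, Complex.ofReal_one] at at_zero
  rw [at_zero]
  exact one_ne_zero

lemma fourier_eq (hg : HasMittagLefflerFourier β α a g) :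
    𝓕 (fun x => (g x : ℂ))
      = fun η => (mittagLeffler β (-(a * (2 * π) ^ α * ‖η‖ ^ α)) : ℂ) := by
  funext η
  rw [fourier_eq_integral_exp_inner, hg, norm_smul, norm_neg, norm_of_nonneg two_pi_pos.le,
    mul_rpow two_pi_pos.le (norm_nonneg η), mul_assoc]

theorem integral_sub_sq_le (hg : HasMittagLefflerFourier β α a g)
    (hh : HasMittagLefflerFourier β α b h) (hβ0 : 0 < β) (hβ1 : β ≤ 1) (hα0 : 0 < α)
    (hα : (finrank ℝ E : ℝ) < 2 * α) (ha : 0 < a) (hab : a ≤ b) :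
    ∫ x, (h x - g x) ^ 2 ≤ (∫ x, g x ^ 2) - ∫ x, h x ^ 2 := by
  have scale_pos : 0 < (2 * π) ^ α := rpow_pos_of_pos two_pi_pos α
  have memLp {c : ℝ} (hc : 0 < c) :
      MemLp (fun η : E => (mittagLeffler β (-(c * (2 * π) ^ α * ‖η‖ ^ α)) : ℂ)) 2 :=
    (memLp_two_mittagLeffler_norm hβ0 hβ1 hα0.le hα (mul_pos hc scale_pos)).ofReal
  have difference := integral_norm_sub_sq_le_of_fourier (hh.integrable_ofReal hα0.ne')
    (hg.integrable_ofReal hα0.ne') (hh.fourier_eq ▸ memLp (ha.trans_le hab))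
    (hg.fourier_eq ▸ memLp ha) fun η => ?_
  · simpa only [← Complex.ofReal_sub, Complex.norm_real, norm_eq_abs, sq_abs] using difference
  · have argument_nonpos {c : ℝ} (hc : 0 < c) : -(c * (2 * π) ^ α * ‖η‖ ^ α) ≤ 0 :=
      neg_nonpos.2 (by positivity)
    have larger_nonneg := mittagLeffler_nonneg_of_nonpos hβ0 hβ1
      (argument_nonpos (ha.trans_le hab))
    have larger_le := monotoneOn_mittagLeffler hβ0 hβ1
      (argument_nonpos (ha.trans_le hab)) (argument_nonpos ha)
      (neg_le_neg (by gcongr))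
    rw [hg.fourier_eq, hh.fourier_eq]
    simp only [← Complex.ofReal_sub, RCLike.inner_apply, Complex.conj_ofReal, ← Complex.ofReal_mul,
      Complex.ofReal_re]
    exact mul_nonneg (sub_nonneg.2 larger_le) larger_nonneg

end HasMittagLefflerFourier

end Symbol

section TimeIntegration

lemma setIntegral_Ioc_le_of_le_sub_rpow {F : ℝ → ℝ} {C a t t' : ℝ} (hC : 0 ≤ C) (ha : a < 1)
    (ht : 0 ≤ t) (htt' : t ≤ t') (nonneg : ∀ r ∈ Ioo 0 t, 0 ≤ F r)
    (le : ∀ r ∈ Ioo 0 t, F r ≤ C * (t - r) ^ (-a) - C * (t' - r) ^ (-a)) :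
    ∫ r in Ioc 0 t, F r ≤ C / (1 - a) * (t' - t) ^ (1 - a) := by
  have exponent : -1 < -a := neg_lt_neg ha
  have exponent_pos : 0 < 1 - a := sub_pos.2 ha
  have integrable (T : ℝ) : IntervalIntegrable (fun r => C * (T - r) ^ (-a)) volume 0 t :=
    (intervalIntegrable_sub_rpow exponent T 0 t).const_mul C
  have value (T : ℝ) : ∫ r in 0..t, C * (T - r) ^ (-a)
      = C / (1 - a) * (T ^ (1 - a) - (T - t) ^ (1 - a)) := by
    rw [intervalIntegral.integral_const_mul, integral_sub_rpow exponent, sub_zero,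
      neg_add_eq_sub a 1]
    ring
  calc ∫ r in Ioc 0 t, F r ≤ ∫ r in Ioc 0 t, (C * (t - r) ^ (-a) - C * (t' - r) ^ (-a)) := by
        rw [integral_Ioc_eq_integral_Ioo, integral_Ioc_eq_integral_Ioo]
        refine integral_mono_of_nonneg ?_
          (((integrable t).sub (integrable t')).1.mono_set Ioo_subset_Ioc_self) ?_
        · filter_upwards [ae_restrict_mem measurableSet_Ioo] with r hr using nonneg r hr
        · filter_upwards [ae_restrict_mem measurableSet_Ioo] with r hr using le r hr
    _ = C / (1 - a) * (t' - t) ^ (1 - a) - C / (1 - a) * (t' ^ (1 - a) - t ^ (1 - a)) := by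
      rw [← intervalIntegral.integral_of_le ht,
        intervalIntegral.integral_sub (integrable t) (integrable t'), value, value, sub_self,
        zero_rpow exponent_pos.ne']
      ring
    _ ≤ C / (1 - a) * (t' - t) ^ (1 - a) :=
      sub_le_self _ (mul_nonneg (div_nonneg hC exponent_pos.le)
        (sub_nonneg.2 (rpow_le_rpow ht htt' exponent_pos.le)))

end TimeIntegration

theorem time_increment_estimate_general {E : Type*} [NormedAddCommGroup E]
    [InnerProductSpace ℝ E] [FiniteDimensional ℝ E] [MeasurableSpace E] [BorelSpace E]
    {ν β α : ℝ} (hν : 0 < ν) (hβ0 : 0 < β) (hβ1 : β ≤ 1)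
    (hα : (finrank ℝ E : ℝ) < min 2 β⁻¹ * α) {G : ℝ → E → ℝ} {Cstar : ℝ}
    (hF : ∀ s > (0 : ℝ), ∀ ξ : E, (∫ x, Complex.exp (Complex.I * (⟪ξ, x⟫ : ℝ)) * (G s x : ℂ))
      = (mittagLeffler β (-(ν * ‖ξ‖ ^ α * s ^ β)) : ℂ))
    (hL2 : ∀ s > (0 : ℝ), ∫ x, (G s x) ^ 2 = Cstar * s ^ (-(β * finrank ℝ E / α)))
    {t t' : ℝ} (ht : 0 ≤ t) (htt' : t ≤ t') (x : E) :
    ∫ r in Ioc (0 : ℝ) t, ∫ y, (G (t' - r) (x - y) - G (t - r) (x - y)) ^ 2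
      ≤ Cstar / (1 - β * finrank ℝ E / α) * (t' - t) ^ (1 - β * finrank ℝ E / α) := by
  have hα0 : 0 < α :=
    pos_of_mul_pos_right ((Nat.cast_nonneg _).trans_lt hα) (by positivity)
  have finrank_lt_two_mul : (finrank ℝ E : ℝ) < 2 * α :=
    hα.trans_le (mul_le_mul_of_nonneg_right (min_le_left _ _) hα0.le)
  have exponent_lt_one : β * finrank ℝ E / α < 1 := by
    rw [div_lt_one hα0, ← lt_inv_mul_iff₀ hβ0]
    exact hα.trans_le (mul_le_mul_of_nonneg_right (min_le_right _ _) hα0.le)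
  have Cstar_nonneg : 0 ≤ Cstar := by
    have at_one := hL2 1 one_pos
    rw [one_rpow, mul_one] at at_one
    exact at_one ▸ integral_nonneg fun _ => sq_nonneg _
  have fourier {s : ℝ} (hs : 0 < s) : HasMittagLefflerFourier β α (ν * s ^ β) (G s) := fun ξ => by
    rw [hF s hs ξ, mul_right_comm]
  refine setIntegral_Ioc_le_of_le_sub_rpow Cstar_nonneg exponent_lt_one ht htt'
    (fun r _ => integral_nonneg fun _ => sq_nonneg _) fun r hr => ?_
  have hs : 0 < t - r := sub_pos.2 hr.2
  have hs' : 0 < t' - r := hs.trans_le (sub_le_sub_right htt' r)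
  rw [integral_sub_left_eq_self (fun y => (G (t' - r) y - G (t - r) y) ^ 2) volume x,
    ← hL2 _ hs, ← hL2 _ hs']
  exact (fourier hs).integral_sub_sq_le (fourier hs') hβ0 hβ1 hα0 finrank_lt_two_mul
    (by positivity) (by gcongr)

theorem time_increment_estimate (d : ℕ) (hd : 1 ≤ d) (ν β α : ℝ)
    (hν : 0 < ν) (hβ0 : 0 < β) (hβ1 : β < 1) (hα0 : 0 < α) (hα2 : α ≤ 2)
    (hdα : (d : ℝ) < min 2 β⁻¹ * α)
    (G : ℝ → EuclideanSpace ℝ (Fin d) → ℝ) (Cstar : ℝ)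
    (hF : ∀ s > (0 : ℝ), ∀ ξ : EuclideanSpace ℝ (Fin d),
      (∫ x, Complex.exp (Complex.I * (⟪ξ, x⟫ : ℝ)) * (G s x : ℂ))
        = (mittagLeffler β (-(ν * ‖ξ‖ ^ α * s ^ β)) : ℂ))
    (hL2 : ∀ s > (0 : ℝ), ∫ x, (G s x) ^ 2 = Cstar * s ^ (-(β * d / α)))
    (t t' : ℝ) (ht : 0 ≤ t) (htt' : t ≤ t') (x : EuclideanSpace ℝ (Fin d)) :
    ∫ r in Ioc (0 : ℝ) t, ∫ y, (G (t' - r) (x - y) - G (t - r) (x - y)) ^ 2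
      ≤ Cstar / (1 - β * d / α) * (t' - t) ^ (1 - β * d / α) := by
  simpa only [finrank_euclideanSpace_fin] using time_increment_estimate_general hν hβ0 hβ1.le
    (by rwa [finrank_euclideanSpace_fin]) hF (by rwa [finrank_euclideanSpace_fin]) ht htt' x
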